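/- For every τ in the complex upper half plane, f_{2,0}(τ)·f_{2,1}(τ) = E_{2,2}(τ); moreover f_{2,j}(((−1)ʲ + i)/2) = 0 for j ∈ {0,1}. -/

import Mathlib

open Complex

/-- `q = exp(2πiτ)`. -/
noncomputable def qq (τ : ℂ) : ℂ := Complex.exp (2 * Real.pi * Complex.I * τ)

/-- `σ_k(n) = Σ_{d ∣ n} d^k`, as a complex number. -/
noncomputable def sigmaC (k n : ℕ) : ℂ := ∑ d ∈ n.divisors, (d : ℂ) ^ k

/-- Eisenstein series `E₂(τ) = 1 - 24 Σ_{n≥1} σ₁(n) qⁿ`. -/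
noncomputable def E₂ (τ : ℂ) : ℂ := 1 - 24 * ∑' n : ℕ, sigmaC 1 (n + 1) * qq τ ^ (n + 1)

/-- Eisenstein series `E₄(τ) = 1 + 240 Σ_{n≥1} σ₃(n) qⁿ`. -/
noncomputable def E₄ (τ : ℂ) : ℂ := 1 + 240 * ∑' n : ℕ, sigmaC 3 (n + 1) * qq τ ^ (n + 1)

/-- Eisenstein series `E₆(τ) = 1 - 504 Σ_{n≥1} σ₅(n) qⁿ`. -/
noncomputable def E₆ (τ : ℂ) : ℂ := 1 - 504 * ∑' n : ℕ, sigmaC 5 (n + 1) * qq τ ^ (n + 1)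

/-- Dedekind eta function `η(τ) = exp(πiτ/12) ∏_{n≥1} (1 - qⁿ)`. -/
noncomputable def η (τ : ℂ) : ℂ :=
  Complex.exp (Real.pi * Complex.I * τ / 12) * ∏' n : ℕ, (1 - qq τ ^ (n + 1))

/-- Theta function `θ(τ) = Σ_{n ∈ ℤ} q^{n²}`. -/
noncomputable def θ (τ : ℂ) : ℂ := ∑' n : ℤ, qq τ ^ (n ^ 2)

/-- The character `χ₋₄`: `χ₋₄(d) = 1, -1, 0` according as `d ≡ 1, 3, 0/2 (mod 4)`. -/
noncomputable def χ₄ (d : ℕ) : ℂ := if d % 4 = 1 then 1 else if d % 4 = 3 then -1 else 0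

/-- The character `χ₋₃`: `χ₋₃(d) = 1, -1, 0` according as `d ≡ 1, 2, 0 (mod 3)`. -/
noncomputable def χ₃ (d : ℕ) : ℂ := if d % 3 = 1 then 1 else if d % 3 = 2 then -1 else 0

/-- `E_{1,-4}(τ) = 1/4 + Σ_{n≥1} (Σ_{d∣n} χ₋₄(d)) qⁿ`. -/
noncomputable def E₁₄ (τ : ℂ) : ℂ :=
  1 / 4 + ∑' n : ℕ, (∑ d ∈ (n + 1).divisors, χ₄ d) * qq τ ^ (n + 1)

/-- `E_{1,-3}(τ) = 1/6 + Σ_{n≥1} (Σ_{d∣n} χ₋₃(d)) qⁿ`. -/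
noncomputable def E₁₃ (τ : ℂ) : ℂ :=
  1 / 6 + ∑' n : ℕ, (∑ d ∈ (n + 1).divisors, χ₃ d) * qq τ ^ (n + 1)

/-- `E_{2,2}(τ) = 2E₂(2τ) - E₂(τ)`. -/
noncomputable def E₂₂ (τ : ℂ) : ℂ := 2 * E₂ (2 * τ) - E₂ τ

/-- `E_{2,4}(τ) = (4E₄(2τ) - E₄(τ))/3`. -/
noncomputable def E₂₄ (τ : ℂ) : ℂ := (4 * E₄ (2 * τ) - E₄ τ) / 3

/-- `E_{3,2}(τ) = (3E₂(3τ) - E₂(τ))/2`. -/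
noncomputable def E₃₂ (τ : ℂ) : ℂ := (3 * E₂ (3 * τ) - E₂ τ) / 2

/-- `E_{3,4}(τ) = (9E₄(3τ) - E₄(τ))/8`. -/
noncomputable def E₃₄ (τ : ℂ) : ℂ := (9 * E₄ (3 * τ) - E₄ τ) / 8

/-- `E_{4,2}(τ) = (4E₂(4τ) - E₂(τ))/3`. -/
noncomputable def E₄₂ (τ : ℂ) : ℂ := (4 * E₂ (4 * τ) - E₂ τ) / 3

/-- `E'_{4,2}(τ) = 4E₂(4τ) - 4E₂(2τ) + E₂(τ)`. -/
noncomputable def E₄₂' (τ : ℂ) : ℂ := 4 * E₂ (4 * τ) - 4 * E₂ (2 * τ) + E₂ τ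

/-- `f_{1,j}(τ) = 2E₂(τ) - ((3+(-1)ʲi√3)/6)E₂(τ/2) - ((3-(-1)ʲi√3)/6)E₂((τ+1)/2)`. -/
noncomputable def f₁ (j : ℕ) (τ : ℂ) : ℂ :=
  2 * E₂ τ - ((3 + (-1 : ℂ) ^ j * Complex.I * Real.sqrt 3) / 6) * E₂ (τ / 2)
    - ((3 - (-1 : ℂ) ^ j * Complex.I * Real.sqrt 3) / 6) * E₂ ((τ + 1) / 2)

/-- `g_{1,j}(τ) = (3/2)E₂(τ) - (1/4) Σ_{0≤m≤2, m≢j (mod 3)} E₂((τ+m)/3)`. -/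
noncomputable def g₁ (j : ℕ) (τ : ℂ) : ℂ :=
  (3 / 2) * E₂ τ -
    (1 / 4) * ∑ m ∈ (Finset.range 3).filter (fun m => ¬ m % 3 = j % 3), E₂ ((τ + m) / 3)

/-- `f_{2,j}(τ) = 4E_{1,-4}(τ) + (-1)ʲ·2i·(E_{1,-4}(τ/2) - E_{1,-4}((τ+1)/2))`. -/
noncomputable def f₂ (j : ℕ) (τ : ℂ) : ℂ :=
  4 * E₁₄ τ + (-1 : ℂ) ^ j * 2 * Complex.I * (E₁₄ (τ / 2) - E₁₄ ((τ + 1) / 2))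

/-- `f_{3,j}(τ) = 6E_{1,-3}(2τ) + (-1)ʲ·i√3·(E_{1,-3}(τ/2) - E_{1,-3}((τ+1)/2))`. -/
noncomputable def f₃ (j : ℕ) (τ : ℂ) : ℂ :=
  6 * E₁₃ (2 * τ) +
    (-1 : ℂ) ^ j * Complex.I * Real.sqrt 3 * (E₁₃ (τ / 2) - E₁₃ ((τ + 1) / 2))

/-- `f_{4,j}(τ) = θ(τ/2 - (-1)ʲ/4)`. -/
noncomputable def f₄ (j : ℕ) (τ : ℂ) : ℂ := θ (τ / 2 - (-1 : ℂ) ^ j / 4)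

/-- `g_{4,j}(τ) = 2θ(2τ)² - θ((τ+j)/2)²`. -/
noncomputable def g₄ (j : ℕ) (τ : ℂ) : ℂ := 2 * θ (2 * τ) ^ 2 - θ ((τ + j) / 2) ^ 2

/-- `E_{3,-3,1}(τ) = -1/9 + Σ_{n≥1} (Σ_{d∣n} d²χ₋₃(d)) qⁿ`. -/
noncomputable def E₃₃₁ (τ : ℂ) : ℂ :=
  -(1 / 9) + ∑' n : ℕ, (∑ d ∈ (n + 1).divisors, (d : ℂ) ^ 2 * χ₃ d) * qq τ ^ (n + 1)

/-- `E_{3,1,-3}(τ) = Σ_{n≥1} (Σ_{d∣n} d²χ₋₃(n/d)) qⁿ`. -/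
noncomputable def E₃₁₃ (τ : ℂ) : ℂ :=
  ∑' n : ℕ, (∑ d ∈ (n + 1).divisors, (d : ℂ) ^ 2 * χ₃ ((n + 1) / d)) * qq τ ^ (n + 1)

open Filter Topology
open scoped ArithmeticFunction.sigma

lemma Summable.comp_odd {f : ℕ → ℂ} (hf : Summable f) : Summable fun k ↦ f (2 * k + 1) :=
  hf.comp_injective (i := fun k ↦ 2 * k + 1) fun a b h ↦ by simpa using h

lemma Summable.tsum_eq_even_add_odd {f : ℕ → ℂ} (hf : Summable f) :
    ∑' k, f k = ∑' k, f (2 * k) + ∑' k, f (2 * k + 1) :=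
  (tsum_even_add_odd (hf.comp_injective (i := fun k ↦ 2 * k) fun a b h ↦ by simpa using h)
    hf.comp_odd).symm

section LambertSeries

variable {x : ℂ}

lemma one_sub_pow_ne_zero (hx : ‖x‖ < 1) {n : ℕ} (hn : n ≠ 0) : 1 - x ^ n ≠ 0 := by
  intro h
  have h1 : ‖x ^ n‖ = 1 := by rw [← sub_eq_zero.mp h, norm_one]
  rw [norm_pow] at h1
  exact (pow_lt_one₀ (norm_nonneg x) hx hn).ne h1

lemma one_add_pow_ne_zero (hx : ‖x‖ < 1) {n : ℕ} (hn : n ≠ 0) : 1 + x ^ n ≠ 0 := by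
  intro h
  have h1 : ‖x ^ n‖ = 1 := by rw [← neg_eq_of_add_eq_zero_right h, norm_neg, norm_one]
  rw [norm_pow] at h1
  exact (pow_lt_one₀ (norm_nonneg x) hx hn).ne h1

lemma norm_pow_lt_one (hx : ‖x‖ < 1) {n : ℕ} (hn : n ≠ 0) : ‖x ^ n‖ < 1 := by
  rw [norm_pow]
  exact pow_lt_one₀ (norm_nonneg x) hx hn

/-- The generating series `∑ σ₁(n) xⁿ`. -/
noncomputable def sigmaSeries (x : ℂ) : ℂ := ∑' n : ℕ+, σ 1 n * x ^ (n : ℕ)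

/-- The Lambert series `∑_{n ≥ 0} xⁿ / (1 + x²ⁿ) - 1/4`, which equals `E₁₄` at `x = q`. -/
noncomputable def chiSeries (x : ℂ) : ℂ := ∑' n : ℕ, x ^ n / (1 + (x ^ n) ^ 2) - 1 / 4

lemma summable_pow_div_one_add_sq (hx : ‖x‖ < 1) :
    Summable fun n : ℕ ↦ x ^ n / (1 + (x ^ n) ^ 2) := by
  simp only [div_eq_mul_one_div (x ^ _)]
  apply Summable.mul_tendsto_const (c := 1 / (1 + 0 ^ 2))
    (by simpa using summable_geometric_of_lt_one (norm_nonneg x) hx)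
  rw [Nat.cofinite_eq_atTop]
  exact tendsto_const_nhds.div (tendsto_const_nhds.add
    ((tendsto_pow_atTop_nhds_zero_of_norm_lt_one hx).pow 2)) (by simp)

lemma summable_pow_div_one_sub_sq (hx : ‖x‖ < 1) :
    Summable fun n : ℕ ↦ x ^ n / (1 - x ^ n) ^ 2 := by
  simp only [div_eq_mul_one_div (x ^ _)]
  apply Summable.mul_tendsto_const (c := 1 / (1 - 0) ^ 2)
    (by simpa using summable_geometric_of_lt_one (norm_nonneg x) hx)
  rw [Nat.cofinite_eq_atTop]
  exact tendsto_const_nhds.div ((tendsto_const_nhds.sub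
    (tendsto_pow_atTop_nhds_zero_of_norm_lt_one hx)).pow 2) (by simp)

lemma sigmaSeries_eq_tsum_mul (hx : ‖x‖ < 1) :
    sigmaSeries x = ∑' n : ℕ+, n * x ^ (n : ℕ) / (1 - x ^ (n : ℕ)) := by
  simpa [sigmaSeries] using (tsum_pow_div_one_sub_eq_tsum_sigma hx 1).symm

lemma sigmaSeries_eq_tsum (hx : ‖x‖ < 1) :
    sigmaSeries x = ∑' n : ℕ, x ^ n / (1 - x ^ n) ^ 2 := by
  rw [← tsum_pnat_eq_tsum_of_eq_zero (f := fun n : ℕ ↦ x ^ n / (1 - x ^ n) ^ 2) (by simp),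
    sigmaSeries, ← tsum_prod_pow_eq_tsum_sigma 1 hx]
  refine tsum_congr fun d ↦ ?_
  rw [← tsum_coe_mul_geometric_of_norm_lt_one (norm_pow_lt_one hx d.ne_zero),
    ← tsum_pnat_eq_tsum_of_eq_zero (f := fun n : ℕ ↦ (n : ℂ) * (x ^ (d : ℕ)) ^ n) (by simp)]
  simp [pow_mul]

lemma sigmaSeries_add_neg (hx : ‖x‖ < 1) :
    sigmaSeries x + sigmaSeries (-x) = 6 * sigmaSeries (x ^ 2) - 4 * sigmaSeries (x ^ 4) := by
  have hx' : ‖-x‖ < 1 := by rwa [norm_neg]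
  have h2 := norm_pow_lt_one hx two_ne_zero
  have h4 := norm_pow_lt_one hx four_ne_zero
  have split {y : ℂ} (hy : ‖y‖ < 1) : sigmaSeries y = sigmaSeries (y ^ 2) +
      ∑' k : ℕ, y ^ (2 * k + 1) / (1 - y ^ (2 * k + 1)) ^ 2 := by
    have hs := summable_pow_div_one_sub_sq hy
    rw [sigmaSeries_eq_tsum hy, sigmaSeries_eq_tsum (norm_pow_lt_one hy two_ne_zero),
      hs.tsum_eq_even_add_odd]
    simp [pow_mul]
  have e1 := split hx
  have e2 := split hx'
  have e3 := split h2
  have hsum : ∑' k : ℕ, x ^ (2 * k + 1) / (1 - x ^ (2 * k + 1)) ^ 2 +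
      ∑' k : ℕ, (-x) ^ (2 * k + 1) / (1 - (-x) ^ (2 * k + 1)) ^ 2 =
      4 * ∑' k : ℕ, (x ^ 2) ^ (2 * k + 1) / (1 - (x ^ 2) ^ (2 * k + 1)) ^ 2 := by
    rw [← Summable.tsum_add (summable_pow_div_one_sub_sq hx).comp_odd
      (summable_pow_div_one_sub_sq hx').comp_odd, ← tsum_mul_left]
    refine tsum_congr fun k ↦ ?_
    have hm : 2 * k + 1 ≠ 0 := by omega
    have n1 := one_sub_pow_ne_zero hx hm
    have n2 := one_add_pow_ne_zero hx hm
    have n3 := one_sub_pow_ne_zero h2 hm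
    rw [pow_right_comm] at n3
    simp only [pow_right_comm x 2]
    rw [Odd.neg_pow (by simp)]
    generalize x ^ (2 * k + 1) = y at *
    rw [sub_neg_eq_add]
    field_simp
    ring
  rw [neg_sq] at e2
  rw [show (x ^ 2) ^ 2 = x ^ 4 by ring] at e3
  linear_combination e1 + e2 + hsum - 4 * e3

lemma chiSeries_add_neg (hx : ‖x‖ < 1) :
    chiSeries x + chiSeries (-x) = 2 * chiSeries (x ^ 2) := by
  have hx' : ‖-x‖ < 1 := by rwa [norm_neg]
  have split {y : ℂ} (hy : ‖y‖ < 1) : chiSeries y = chiSeries (y ^ 2) +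
      ∑' k : ℕ, y ^ (2 * k + 1) / (1 + (y ^ (2 * k + 1)) ^ 2) := by
    have hs := summable_pow_div_one_add_sq hy
    rw [chiSeries, chiSeries,
      hs.tsum_eq_even_add_odd]
    simp only [pow_mul]
    ring
  have e1 := split hx
  have e2 := split hx'
  have hodd (k : ℕ) : (-x) ^ (2 * k + 1) = -x ^ (2 * k + 1) := Odd.neg_pow (by simp) x
  simp only [hodd, neg_sq, neg_div, tsum_neg] at e2
  linear_combination e1 + e2

end LambertSeries

section SechSums

variable {x : ℂ}

lemma one_add_zpow_sq_ne_zero (hx : ‖x‖ < 1) (h0 : x ≠ 0) (n : ℤ) : 1 + (x ^ n) ^ 2 ≠ 0 := by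
  obtain ⟨m, rfl | rfl⟩ := n.eq_nat_or_neg
  · rw [zpow_natCast, ← pow_mul]
    rcases eq_or_ne m 0 with rfl | hm
    · norm_num
    · exact one_add_pow_ne_zero hx (by omega)
  · rw [zpow_neg, zpow_natCast, inv_pow, ← pow_mul]
    have hp : x ^ (m * 2) ≠ 0 := pow_ne_zero _ h0
    have : 1 + x ^ (m * 2) ≠ 0 := by
      rcases eq_or_ne m 0 with rfl | hm
      · norm_num
      · exact one_add_pow_ne_zero hx (by omega)
    rw [show 1 + (x ^ (m * 2))⁻¹ = (1 + x ^ (m * 2)) / x ^ (m * 2) by field_simp; ring]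
    exact div_ne_zero this hp

/-- With `x = exp (-t)`, the hyperbolic secant of `n t`. -/
noncomputable def sechTerm (x : ℂ) (n : ℤ) : ℂ := 2 * x ^ n / (1 + (x ^ n) ^ 2)

/-- With `x = exp (-t)`, the hyperbolic tangent of `n t`. -/
noncomputable def tanhTerm (x : ℂ) (n : ℤ) : ℂ := (1 - (x ^ n) ^ 2) / (1 + (x ^ n) ^ 2)

lemma sechTerm_neg (hx : ‖x‖ < 1) (h0 : x ≠ 0) (n : ℤ) : sechTerm x (-n) = sechTerm x n := by
  have h1 := one_add_zpow_sq_ne_zero hx h0 n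
  have h2 := one_add_zpow_sq_ne_zero hx h0 (-n)
  have hp : x ^ n ≠ 0 := zpow_ne_zero _ h0
  rw [zpow_neg] at h2
  rw [sechTerm, sechTerm, zpow_neg, div_eq_div_iff h2 h1]
  field_simp
  ring

lemma tanhTerm_neg (hx : ‖x‖ < 1) (h0 : x ≠ 0) (n : ℤ) : tanhTerm x (-n) = -tanhTerm x n := by
  have h1 := one_add_zpow_sq_ne_zero hx h0 n
  have h2 := one_add_zpow_sq_ne_zero hx h0 (-n)
  have hp : x ^ n ≠ 0 := zpow_ne_zero _ h0
  rw [zpow_neg] at h2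
  rw [tanhTerm, tanhTerm, zpow_neg, ← neg_div, div_eq_div_iff h2 h1]
  field_simp
  ring

lemma summable_sechTerm (hx : ‖x‖ < 1) (h0 : x ≠ 0) : Summable (sechTerm x) := by
  have h : Summable fun n : ℕ ↦ sechTerm x n := by
    simpa [sechTerm, mul_div_assoc] using (summable_pow_div_one_add_sq hx).mul_left 2
  refine Summable.of_nat_of_neg h ?_
  simpa only [sechTerm_neg hx h0] using h

lemma tsum_sechTerm (hx : ‖x‖ < 1) (h0 : x ≠ 0) : ∑' n, sechTerm x n = 4 * chiSeries x := by
  have h := summable_pow_div_one_add_sq hx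
  rw [tsum_int_eq_zero_add_two_mul_tsum_pnat (fun n ↦ sechTerm_neg hx h0 n)
    (summable_sechTerm hx h0), chiSeries, h.tsum_eq_zero_add]
  rw [tsum_pnat_eq_tsum_succ (f := fun n : ℕ ↦ sechTerm x n)]
  simp only [sechTerm, zpow_natCast, mul_div_assoc, tsum_mul_left]
  norm_num
  ring

lemma sechTerm_mul_sechTerm (hx : ‖x‖ < 1) (h0 : x ≠ 0) {k : ℕ} (hk : k ≠ 0) (n : ℤ) :
    sechTerm x (n + k) * sechTerm x n =
      2 * x ^ k / (1 - (x ^ k) ^ 2) * (tanhTerm x (n + k) - tanhTerm x n) := by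
  have h1 := one_add_zpow_sq_ne_zero hx h0 n
  have h2 := one_add_zpow_sq_ne_zero hx h0 (n + k)
  have h3 : 1 - (x ^ k) ^ 2 ≠ 0 := by
    rw [← pow_mul]; exact one_sub_pow_ne_zero hx (by omega)
  rw [zpow_add₀ h0, zpow_natCast] at h2
  simp only [sechTerm, tanhTerm, zpow_add₀ h0, zpow_natCast]
  generalize x ^ n = y at *
  generalize x ^ k = z at *
  rw [div_mul_div_comm, div_sub_div _ _ h2 h1, div_mul_div_comm,
    div_eq_div_iff (mul_ne_zero h2 h1) (mul_ne_zero h3 (mul_ne_zero h2 h1))]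
  ring

lemma summable_sechTerm_prod (hx : ‖x‖ < 1) (h0 : x ≠ 0) :
    Summable fun p : ℤ × ℤ ↦ sechTerm x p.1 * sechTerm x p.2 :=
  summable_mul_of_summable_norm (summable_sechTerm hx h0).norm (summable_sechTerm hx h0).norm

/-- The shear `(k, n) ↦ (n + k, n)` of `ℤ × ℤ`. -/
def shearEquiv : ℤ × ℤ ≃ ℤ × ℤ where
  toFun p := (p.2 + p.1, p.2)
  invFun p := (p.1 - p.2, p.2)
  left_inv p := by simp
  right_inv p := by simp

lemma summable_sechTerm_shear (hx : ‖x‖ < 1) (h0 : x ≠ 0) :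
    Summable fun p : ℤ × ℤ ↦ sechTerm x (p.2 + p.1) * sechTerm x p.2 :=
  shearEquiv.summable_iff.mpr (summable_sechTerm_prod hx h0)

lemma tendsto_tanhTerm (hx : ‖x‖ < 1) : Tendsto (fun n : ℕ ↦ tanhTerm x n) atTop (𝓝 1) := by
  have h := (tendsto_pow_atTop_nhds_zero_of_norm_lt_one hx).pow 2
  have := ((tendsto_const_nhds (x := (1 : ℂ))).sub h).div
    ((tendsto_const_nhds (x := (1 : ℂ))).add h) (by simp)
  simpa [tanhTerm, Pi.div_def] using this

lemma summable_tanhTerm_sub_one (hx : ‖x‖ < 1) (h0 : x ≠ 0) :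
    Summable fun n : ℤ ↦ tanhTerm x (n + 1) - tanhTerm x n := by
  have hc : 2 * x / (1 - x ^ 2) ≠ 0 :=
    div_ne_zero (by simpa using h0) (one_sub_pow_ne_zero hx two_ne_zero)
  have h : Summable fun n : ℤ ↦ sechTerm x (n + 1) * sechTerm x n :=
    (summable_sechTerm_shear hx h0).prod_factor 1
  have heq (n : ℤ) : sechTerm x (n + 1) * sechTerm x n =
      2 * x / (1 - x ^ 2) * (tanhTerm x (n + 1) - tanhTerm x n) := by
    simpa using sechTerm_mul_sechTerm hx h0 one_ne_zero n
  simp only [heq] at h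
  exact (summable_mul_left_iff hc).mp h

lemma hasSum_nat_tanhTerm_sub_one (hx : ‖x‖ < 1) (h0 : x ≠ 0) :
    HasSum (fun n : ℕ ↦ tanhTerm x ((n : ℤ) + 1) - tanhTerm x n) 1 := by
  have hs : Summable fun n : ℕ ↦ tanhTerm x ((n : ℤ) + 1) - tanhTerm x n :=
    (summable_tanhTerm_sub_one hx h0).comp_injective (i := fun n : ℕ ↦ (n : ℤ)) Nat.cast_injective
  have hz : tanhTerm x 0 = 0 := by simp [tanhTerm]
  rw [hs.hasSum_iff_tendsto_nat]
  refine (tendsto_tanhTerm hx).congr fun n ↦ ?_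
  have := Finset.sum_range_sub (fun n : ℕ ↦ tanhTerm x n) n
  simpa [hz] using this.symm

lemma hasSum_tanhTerm_sub_one (hx : ‖x‖ < 1) (h0 : x ≠ 0) :
    HasSum (fun n : ℤ ↦ tanhTerm x (n + 1) - tanhTerm x n) 2 := by
  have hnat := hasSum_nat_tanhTerm_sub_one hx h0
  have hneg : HasSum (fun n : ℕ ↦ tanhTerm x (-((n : ℤ) + 1) + 1) - tanhTerm x (-((n : ℤ) + 1)))
      1 := by
    convert hnat using 2 with n
    rw [show -((n : ℤ) + 1) + 1 = -n by ring, tanhTerm_neg hx h0, tanhTerm_neg hx h0]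
    ring
  rw [← one_add_one_eq_two]
  exact HasSum.of_nat_of_neg_add_one hnat hneg

lemma hasSum_tanhTerm_sub (hx : ‖x‖ < 1) (h0 : x ≠ 0) (k : ℕ) :
    HasSum (fun n : ℤ ↦ tanhTerm x (n + k) - tanhTerm x n) (2 * k) := by
  induction k with
  | zero => simp
  | succ k ih =>
    have h := (Equiv.addRight (k : ℤ)).hasSum_iff.mpr (hasSum_tanhTerm_sub_one hx h0)
    convert ih.add h using 1
    · ext n
      simp only [Function.comp_apply, Equiv.coe_addRight]
      push_cast
      rw [add_assoc]
      ring
    · push_cast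
      ring

lemma tsum_sechTerm_mul_shift (hx : ‖x‖ < 1) (h0 : x ≠ 0) {k : ℕ} (hk : k ≠ 0) :
    ∑' n : ℤ, sechTerm x (n + k) * sechTerm x n = 4 * (k * x ^ k / (1 - (x ^ k) ^ 2)) := by
  simp_rw [sechTerm_mul_sechTerm hx h0 hk]
  rw [tsum_mul_left, (hasSum_tanhTerm_sub hx h0 k).tsum_eq]
  ring

lemma tsum_sechTerm_sq (hx : ‖x‖ < 1) (h0 : x ≠ 0) :
    ∑' n : ℤ, sechTerm x n * sechTerm x n =
      1 + 8 * (sigmaSeries (x ^ 2) - 4 * sigmaSeries (x ^ 4)) := by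
  have h2 := norm_pow_lt_one hx two_ne_zero
  have h4 := norm_pow_lt_one hx four_ne_zero
  have hs : Summable fun n : ℤ ↦ sechTerm x n * sechTerm x n := by
    simpa using (summable_sechTerm_shear hx h0).prod_factor 0
  rw [tsum_int_eq_zero_add_two_mul_tsum_pnat (fun n ↦ by simp only [sechTerm_neg hx h0]) hs,
    sigmaSeries_eq_tsum h2, sigmaSeries_eq_tsum h4, ← tsum_mul_left, ← Summable.tsum_sub
      (summable_pow_div_one_sub_sq h2) ((summable_pow_div_one_sub_sq h4).mul_left 4),
    ← tsum_pnat_eq_tsum_of_eq_zero (by simp), two_nsmul, ← two_mul, ← tsum_mul_left,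
    ← tsum_mul_left]
  congr 1
  · norm_num [sechTerm]
  refine tsum_congr fun n ↦ ?_
  have n1 := one_sub_pow_ne_zero h2 n.ne_zero
  have n2 := one_add_pow_ne_zero h2 n.ne_zero
  have n3 := one_sub_pow_ne_zero h4 n.ne_zero
  rw [sechTerm, zpow_natCast]
  simp only [pow_right_comm x _ (n : ℕ)] at n1 n2 n3 ⊢
  generalize x ^ (n : ℕ) = y at *
  field_simp
  ring

/-- Jacobi's formula for the square of `∑ sech (n t)`. -/
lemma sixteen_mul_chiSeries_sq (hx : ‖x‖ < 1) (h0 : x ≠ 0) :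
    16 * chiSeries x ^ 2 = 1 + 8 * sigmaSeries x - 32 * sigmaSeries (x ^ 4) := by
  have h2 := norm_pow_lt_one hx two_ne_zero
  have hs := summable_sechTerm_shear hx h0
  have hsq : 16 * chiSeries x ^ 2 =
      ∑' k : ℤ, ∑' n : ℤ, sechTerm x (n + k) * sechTerm x n := by
    rw [← hs.tsum_prod, show 16 * chiSeries x ^ 2 = (4 * chiSeries x) * (4 * chiSeries x) by ring,
      ← tsum_sechTerm hx h0, tsum_mul_tsum_of_summable_norm (summable_sechTerm hx h0).norm
        (summable_sechTerm hx h0).norm, ← shearEquiv.tsum_eq]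
    rfl
  have heven (k : ℤ) : ∑' n : ℤ, sechTerm x (n + -k) * sechTerm x n =
      ∑' n : ℤ, sechTerm x (n + k) * sechTerm x n := by
    rw [← (Equiv.addRight k).tsum_eq]
    refine tsum_congr fun n ↦ ?_
    simp [mul_comm]
  have hdiff : sigmaSeries x - sigmaSeries (x ^ 2) =
      ∑' k : ℕ+, (k : ℂ) * x ^ (k : ℕ) / (1 - (x ^ (k : ℕ)) ^ 2) := by
    have hsum {y : ℂ} (hy : ‖y‖ < 1) :
        Summable fun n : ℕ+ ↦ (n : ℂ) * y ^ (n : ℕ) / (1 - y ^ (n : ℕ)) := by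
      refine summable_pnat_iff_summable_nat
        (f := fun n : ℕ ↦ (n : ℂ) * y ^ n / (1 - y ^ n)) |>.mpr ?_
      simpa using summable_norm_pow_mul_geometric_div_one_sub 1 hy
    rw [sigmaSeries_eq_tsum_mul hx, sigmaSeries_eq_tsum_mul h2, ← (hsum hx).tsum_sub (hsum h2)]
    refine tsum_congr fun n ↦ ?_
    have n1 := one_sub_pow_ne_zero hx n.ne_zero
    have n2 := one_sub_pow_ne_zero h2 n.ne_zero
    simp only [pow_right_comm x _ (n : ℕ)] at n2 ⊢
    generalize x ^ (n : ℕ) = y at *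
    field_simp
    ring
  rw [hsq, tsum_int_eq_zero_add_two_mul_tsum_pnat
    (f := fun k : ℤ ↦ ∑' n : ℤ, sechTerm x (n + k) * sechTerm x n) heven hs.prod]
  simp only [tsum_sechTerm_mul_shift hx h0 (PNat.ne_zero _), add_zero, tsum_mul_left]
  rw [tsum_sechTerm_sq hx h0, ← hdiff]
  ring

end SechSums

section Bridge

lemma qq_ne_zero (τ : ℂ) : qq τ ≠ 0 := Complex.exp_ne_zero _

lemma qq_add (τ τ' : ℂ) : qq (τ + τ') = qq τ * qq τ' := by
  rw [qq, qq, qq, ← Complex.exp_add]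
  ring_nf

lemma qq_one : qq 1 = 1 := by rw [qq, mul_one, Complex.exp_two_pi_mul_I]

lemma qq_add_one (τ : ℂ) : qq (τ + 1) = qq τ := by rw [qq_add, qq_one, mul_one]

lemma qq_two_mul (τ : ℂ) : qq (2 * τ) = qq τ ^ 2 := by rw [two_mul, qq_add, sq]

lemma qq_half : qq (1 / 2) = -1 := by
  rw [qq, ← Complex.exp_pi_mul_I]
  ring_nf

lemma qq_half_sq (τ : ℂ) : qq (τ / 2) ^ 2 = qq τ := by
  rw [← qq_two_mul, mul_div_cancel₀ _ two_ne_zero]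

lemma qq_add_one_half (τ : ℂ) : qq ((τ + 1) / 2) = -qq (τ / 2) := by
  rw [add_div, qq_add, qq_half, mul_neg_one]

lemma norm_qq (τ : ℂ) : ‖qq τ‖ = Real.exp (-(2 * Real.pi * τ.im)) := by
  rw [qq, Complex.norm_exp]
  simp

lemma norm_qq_lt_one {τ : ℂ} (hτ : 0 < τ.im) : ‖qq τ‖ < 1 := by
  rw [norm_qq, Real.exp_lt_one_iff]
  have := Real.pi_pos
  simp only [Left.neg_neg_iff]
  positivity

lemma E₂_eq_sigmaSeries (τ : ℂ) : E₂ τ = 1 - 24 * sigmaSeries (qq τ) := by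
  rw [E₂, sigmaSeries, tsum_pnat_eq_tsum_succ (f := fun n : ℕ ↦ (σ 1 n : ℂ) * qq τ ^ n)]
  simp [sigmaC, ArithmeticFunction.sigma_apply]

lemma norm_χ₄_le_one (d : ℕ) : ‖χ₄ d‖ ≤ 1 := by
  unfold χ₄
  split_ifs <;> simp

lemma χ₄_two_mul (k : ℕ) : χ₄ (2 * k) = 0 := by
  rw [χ₄, if_neg (by omega), if_neg (by omega)]

lemma χ₄_two_mul_add_one (k : ℕ) : χ₄ (2 * k + 1) = (-1) ^ k := by
  rcases k.even_or_odd' with ⟨m, rfl | rfl⟩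
  · rw [χ₄, if_pos (by omega)]
    simp
  · rw [χ₄, if_neg (by omega), if_pos (by omega)]
    simp [pow_succ]

lemma hasSum_χ₄_mul_pow {y : ℂ} (hy : ‖y‖ < 1) :
    HasSum (fun k : ℕ ↦ χ₄ k * y ^ k) (y / (1 + y ^ 2)) := by
  have he : HasSum (fun k : ℕ ↦ χ₄ (2 * k) * y ^ (2 * k)) 0 := by
    simp [χ₄_two_mul]
  have ho : HasSum (fun k : ℕ ↦ χ₄ (2 * k + 1) * y ^ (2 * k + 1)) (y / (1 + y ^ 2)) := by
    have h : ‖-y ^ 2‖ < 1 := by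
      rw [norm_neg]
      exact norm_pow_lt_one hy two_ne_zero
    have hgeom := (hasSum_geometric_of_norm_lt_one h).mul_left y
    rw [sub_neg_eq_add, ← div_eq_mul_inv] at hgeom
    have heq : (fun k : ℕ ↦ χ₄ (2 * k + 1) * y ^ (2 * k + 1)) = fun k ↦ y * (-y ^ 2) ^ k := by
      ext k
      rw [χ₄_two_mul_add_one, neg_pow (y ^ 2) k, pow_succ, pow_mul]
      ring
    rw [heq]
    exact hgeom
  have hsum := HasSum.even_add_odd (f := fun k ↦ χ₄ k * y ^ k) he ho
  rwa [zero_add] at hsum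

lemma summable_χ₄_mul_pow {x : ℂ} (hx : ‖x‖ < 1) :
    Summable fun c : ℕ+ × ℕ+ ↦ χ₄ c.2 * x ^ (c.1 * c.2 : ℕ) := by
  refine (summable_prod_mul_pow 0 hx).norm.of_norm_bounded fun c ↦ ?_
  rw [norm_mul, norm_mul]
  refine mul_le_mul_of_nonneg_right ?_ (norm_nonneg _)
  simpa using norm_χ₄_le_one c.2

lemma tsum_sum_divisors_χ₄ {x : ℂ} (hx : ‖x‖ < 1) :
    ∑' n : ℕ+, (∑ d ∈ (n : ℕ).divisors, χ₄ d) * x ^ (n : ℕ) =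
      ∑' n : ℕ+, x ^ (n : ℕ) / (1 + (x ^ (n : ℕ)) ^ 2) := by
  have hs := summable_χ₄_mul_pow hx
  have hs' : Summable fun c : (n : ℕ+) × (n : ℕ).divisorsAntidiagonal ↦
      χ₄ (sigmaAntidiagonalEquivProd c).2 *
        x ^ ((sigmaAntidiagonalEquivProd c).1 * (sigmaAntidiagonalEquivProd c).2 : ℕ) :=
    sigmaAntidiagonalEquivProd.summable_iff.mpr hs
  have hinner (d : ℕ+) : ∑' c : ℕ+, χ₄ c * x ^ (d * c : ℕ) =
      x ^ (d : ℕ) / (1 + (x ^ (d : ℕ)) ^ 2) := by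
    rw [← (hasSum_χ₄_mul_pow (norm_pow_lt_one hx d.ne_zero)).tsum_eq,
      ← tsum_pnat_eq_tsum_of_eq_zero (f := fun k : ℕ ↦ χ₄ k * (x ^ (d : ℕ)) ^ k) (by simp [χ₄])]
    simp only [pow_mul]
  rw [← tsum_congr hinner, ← hs.tsum_prod, ← sigmaAntidiagonalEquivProd.tsum_eq,
    hs'.tsum_sigma]
  refine tsum_congr fun n ↦ ?_
  rw [← Nat.sum_divisorsAntidiagonal' (f := fun _ d ↦ χ₄ d), Finset.sum_mul, tsum_fintype,
    ← Finset.sum_coe_sort]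
  refine Finset.sum_congr rfl fun p _ ↦ ?_
  have hp := (Nat.mem_divisorsAntidiagonal.mp p.2).1
  simp [sigmaAntidiagonalEquivProd, divisorsAntidiagonalFactors, hp]

lemma E₁₄_eq_chiSeries {τ : ℂ} (hτ : 0 < τ.im) : E₁₄ τ = chiSeries (qq τ) := by
  have hx := norm_qq_lt_one hτ
  rw [E₁₄, chiSeries, (summable_pow_div_one_add_sq hx).tsum_eq_zero_add,
    ← tsum_pnat_eq_tsum_succ (f := fun n : ℕ ↦ (∑ d ∈ n.divisors, χ₄ d) * qq τ ^ n),
    ← tsum_pnat_eq_tsum_succ (f := fun n : ℕ ↦ qq τ ^ n / (1 + (qq τ ^ n) ^ 2)),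
    tsum_sum_divisors_χ₄ hx]
  norm_num
  ring

lemma f₂_eq {τ : ℂ} (hτ : 0 < τ.im) (j : ℕ) :
    f₂ j τ = 2 * (chiSeries (qq (τ / 2)) + chiSeries (-qq (τ / 2))) +
      (-1) ^ j * 2 * I * (chiSeries (qq (τ / 2)) - chiSeries (-qq (τ / 2))) := by
  have h1 : 0 < (τ / 2).im := by simpa using hτ
  have h2 : 0 < ((τ + 1) / 2).im := by simpa using hτ
  rw [f₂, E₁₄_eq_chiSeries hτ, E₁₄_eq_chiSeries h1, E₁₄_eq_chiSeries h2, qq_add_one_half,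
    chiSeries_add_neg (norm_qq_lt_one h1), qq_half_sq]
  ring

lemma f₂_zero_mul_f₂_one {τ : ℂ} (hτ : 0 < τ.im) : f₂ 0 τ * f₂ 1 τ = E₂₂ τ := by
  have h1 : 0 < (τ / 2).im := by simpa using hτ
  have hx := norm_qq_lt_one h1
  have h0 := qq_ne_zero (τ / 2)
  have e1 := sixteen_mul_chiSeries_sq hx h0
  have e2 := sixteen_mul_chiSeries_sq (x := -qq (τ / 2)) (by rwa [norm_neg]) (neg_ne_zero.mpr h0)
  have e3 := sigmaSeries_add_neg hx
  rw [f₂_eq hτ, f₂_eq hτ, E₂₂, E₂_eq_sigmaSeries, E₂_eq_sigmaSeries, qq_two_mul, ← qq_half_sq τ]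
  rw [show (-qq (τ / 2)) ^ 4 = qq (τ / 2) ^ 4 by ring] at e2
  rw [show (qq (τ / 2) ^ 2) ^ 2 = qq (τ / 2) ^ 4 by ring]
  generalize chiSeries (qq (τ / 2)) = a at *
  generalize chiSeries (-qq (τ / 2)) = b at *
  linear_combination (1 / 2) * e1 + (1 / 2) * e2 + 4 * e3 - 4 * (a - b) ^ 2 * I_sq

end Bridge

section Zeros

lemma E₂_eq_E2 (z : UpperHalfPlane) : E₂ z = EisensteinSeries.E2 z := by
  rw [EisensteinSeries.E2_eq_tsum_cexp, E₂_eq_sigmaSeries]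
  rfl

lemma E₂_add_one (τ : ℂ) : E₂ (τ + 1) = E₂ τ := by
  rw [E₂_eq_sigmaSeries, E₂_eq_sigmaSeries, qq_add_one]

lemma E₂_neg_inv {τ : ℂ} (hτ : 0 < τ.im) :
    E₂ (-1 / τ) = τ ^ 2 * E₂ τ - 6 * I * τ / Real.pi := by
  obtain ⟨z, rfl⟩ : ∃ z : UpperHalfPlane, (z : ℂ) = τ := ⟨⟨τ, hτ⟩, rfl⟩
  have hS : (-1 / (z : ℂ)) = ((ModularGroup.S • z : UpperHalfPlane) : ℂ) := by
    rw [UpperHalfPlane.modular_S_smul]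
    change -1 / (z : ℂ) = (-(z : ℂ))⁻¹
    rw [inv_neg, neg_div, one_div]
  have hz := z.ne_zero
  have hpi : (Real.pi : ℂ) ≠ 0 := by exact_mod_cast Real.pi_ne_zero
  rw [hS, E₂_eq_E2, E₂_eq_E2]
  simp only [EisensteinSeries.E2, Pi.smul_apply, smul_eq_mul]
  rw [EisensteinSeries.G2_S_transform z, riemannZeta_two]
  field_simp
  ring

lemma E₂₂_one_add_I_div_two : E₂₂ ((1 + I) / 2) = 0 := by
  have hpi : (Real.pi : ℂ) ≠ 0 := by exact_mod_cast Real.pi_ne_zero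
  have h1 : E₂ I = 3 / Real.pi := by
    have h := E₂_neg_inv (τ := I) (by simp)
    rw [show (-1 : ℂ) / I = I by field_simp; simp, I_sq] at h
    have : 6 * I * I / (Real.pi : ℂ) = -6 / Real.pi := by rw [mul_assoc, I_mul_I]; ring
    linear_combination (1 / 2) * h - (1 / 2) * this
  have h2 := E₂_neg_inv (τ := (1 + I) / 2) (by norm_num)
  have h3 : (-1 : ℂ) / ((1 + I) / 2) + 1 = I := by
    have : (1 + I) ≠ 0 := fun h ↦ by simpa using congrArg Complex.re h
    field_simp
    linear_combination -I_sq
  rw [← E₂_add_one, h3, h1] at h2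
  rw [E₂₂, show 2 * ((1 + I) / 2) = I + 1 by ring, E₂_add_one, h1]
  generalize E₂ ((1 + I) / 2) = e at *
  linear_combination (-2 * I) * h2 +
    (6 / (Real.pi : ℂ) - e - I * e / 2 + 6 * I / Real.pi) * I_sq

lemma norm_chiSeries_sub_le {x : ℂ} (hx : ‖x‖ ≤ 1 / 4) :
    ‖chiSeries x - 1 / 4 - x / (1 + x ^ 2)‖ ≤ 4 / 45 := by
  have hs := summable_pow_div_one_add_sq (x := x) (by linarith)
  have htail : chiSeries x - 1 / 4 - x / (1 + x ^ 2) =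
      ∑' n : ℕ, x ^ (n + 2) / (1 + (x ^ (n + 2)) ^ 2) := by
    rw [chiSeries, ← hs.sum_add_tsum_nat_add 2]
    simp [Finset.sum_range_succ]
    ring
  have hg : HasSum (fun n : ℕ ↦ 1 / 15 * (1 / 4 : ℝ) ^ n) (4 / 45) := by
    have h := (hasSum_geometric_of_lt_one (r := (1 / 4 : ℝ)) (by norm_num) (by norm_num)).mul_left
      (1 / 15)
    rwa [show (1 / 15 : ℝ) * (1 - 1 / 4)⁻¹ = 4 / 45 by norm_num] at h
  rw [htail]
  refine tsum_of_norm_bounded hg fun n ↦ ?_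
  have hp : ‖x ^ (n + 2)‖ ≤ 1 / 16 * (1 / 4) ^ n := by
    rw [norm_pow]
    refine (pow_le_pow_left₀ (norm_nonneg x) hx _).trans_eq ?_
    ring
  have hp' : ‖x ^ (n + 2)‖ ≤ 1 / 4 := hp.trans (by
    have : (1 / 4 : ℝ) ^ n ≤ 1 := pow_le_one₀ (by norm_num) (by norm_num)
    linarith)
  have hd : 15 / 16 ≤ ‖1 + (x ^ (n + 2)) ^ 2‖ := by
    have h1 := norm_sub_le_norm_add (1 : ℂ) ((x ^ (n + 2)) ^ 2)
    rw [norm_one, norm_pow (x ^ (n + 2))] at h1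
    nlinarith [norm_nonneg (x ^ (n + 2))]
  rw [norm_div, div_le_iff₀ (by linarith)]
  have : 0 ≤ (1 / 4 : ℝ) ^ n := by positivity
  nlinarith

lemma four_lt_exp_half_pi : 4 < Real.exp (Real.pi / 2) := by
  have h1 : (2.7182818283 : ℝ) < Real.exp 1 := Real.exp_one_gt_d9
  have h2 : Real.exp (Real.pi / 2) ^ 2 = Real.exp Real.pi := by
    rw [← Real.exp_nat_mul]
    congr 1
    push_cast
    ring
  have h3 : Real.exp 1 ^ 3 ≤ Real.exp Real.pi := by
    rw [← Real.exp_nat_mul]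
    exact Real.exp_le_exp.mpr (by push_cast; linarith [Real.pi_gt_three])
  have h4 : (16 : ℝ) < Real.exp 1 ^ 3 := by
    calc (16 : ℝ) < 2.7182818283 ^ 3 := by norm_num
      _ ≤ _ := by gcongr
  nlinarith [Real.exp_pos (Real.pi / 2)]

lemma qq_one_add_I_div_four :
    qq ((1 + I) / 2 / 2) = ((Real.exp (-(Real.pi / 2)) : ℝ) : ℂ) * I := by
  have h : 2 * (Real.pi : ℂ) * I * ((1 + I) / 2 / 2) =
      ((-(Real.pi / 2) : ℝ) : ℂ) + Real.pi / 2 * I := by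
    push_cast
    linear_combination (Real.pi / 2 : ℂ) * I_sq
  rw [qq, h, Complex.exp_add, Complex.exp_pi_div_two_mul_I, Complex.ofReal_exp]

lemma f₂_one_ne_zero : f₂ 1 ((1 + I) / 2) ≠ 0 := by
  rw [f₂_eq (by norm_num), qq_one_add_I_div_four]
  set ρ := Real.exp (-(Real.pi / 2)) with hρ
  have hρ0 : 0 < ρ := Real.exp_pos _
  have hρ1 : ρ ≤ 1 / 4 := by
    rw [hρ, Real.exp_neg, one_div]
    exact inv_anti₀ (by norm_num) four_lt_exp_half_pi.le
  have hn : ‖(ρ : ℂ) * I‖ ≤ 1 / 4 := by simpa [abs_of_pos hρ0] using hρ1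
  have ha := norm_chiSeries_sub_le hn
  have hb := norm_chiSeries_sub_le (x := -((ρ : ℂ) * I)) (by rwa [norm_neg])
  have hv : (ρ : ℂ) * I / (1 + ((ρ : ℂ) * I) ^ 2) = ((ρ / (1 - ρ ^ 2) : ℝ) : ℂ) * I := by
    rw [mul_pow, I_sq]
    push_cast
    ring
  rw [neg_sq, neg_div, hv] at hb
  rw [hv] at ha
  have hv0 : 0 ≤ ρ / (1 - ρ ^ 2) := div_nonneg hρ0.le (by nlinarith)
  generalize ρ / (1 - ρ ^ 2) = v at *
  generalize chiSeries ((ρ : ℂ) * I) = a at *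
  generalize chiSeries (-((ρ : ℂ) * I)) = b at *
  intro h
  have hre := congrArg Complex.re h
  have a1 := (abs_le.mp ((Complex.abs_re_le_norm _).trans ha)).1
  have a2 := (abs_le.mp ((Complex.abs_im_le_norm _).trans ha)).1
  have b1 := (abs_le.mp ((Complex.abs_re_le_norm _).trans hb)).1
  have b2 := (abs_le.mp ((Complex.abs_im_le_norm _).trans hb)).2
  norm_num at hre a1 a2 b1 b2
  linarith

lemma f₂_zero_eq_zero : f₂ 0 ((1 + I) / 2) = 0 := by
  have h := f₂_zero_mul_f₂_one (τ := (1 + I) / 2) (by norm_num)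
  rw [E₂₂_one_add_I_div_two] at h
  exact (mul_eq_zero.mp h).resolve_right f₂_one_ne_zero

lemma f₂_one_eq_f₂_zero_add_one {τ : ℂ} (hτ : 0 < τ.im) : f₂ 1 τ = f₂ 0 (τ + 1) := by
  rw [f₂_eq hτ, f₂_eq (by simpa using hτ), qq_add_one_half, neg_neg]
  ring

end Zeros

theorem stmt9 :
    (∀ τ : ℂ, 0 < τ.im → f₂ 0 τ * f₂ 1 τ = E₂₂ τ) ∧
    (∀ j : ℕ, j < 2 → f₂ j (((-1 : ℂ) ^ j + Complex.I) / 2) = 0) := by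
  refine ⟨fun τ hτ ↦ f₂_zero_mul_f₂_one hτ, fun j hj ↦ ?_⟩
  interval_cases j
  · simpa using f₂_zero_eq_zero
  · rw [pow_one, f₂_one_eq_f₂_zero_add_one (by norm_num),
      show (-1 + I) / 2 + 1 = (1 + I) / 2 by ring]
    exact f₂_zero_eq_zero
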